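/- For $n \ge 1$, the partition of the $n\times n$ grid graph into the $n$ vertical columns (the parts $\{i\}\times\{0,\dots,n-1\}$ for $i = 0,\dots,n-1$) is a partition into $n$ parts, each of size $n$ and each inducing a connected subgraph, and its cut score equals $n(n-1)$. Consequently, the maximum cut score over all partitions of the $n\times n$ grid graph into $n$ connected parts of size $n$ equals $n(n-1)$. -/

import Mathlib

open Filter

/-- The `n × n` grid graph: vertices are pairs in `Fin n × Fin n`, adjacent iff they agree
in one coordinate and differ by exactly 1 in the other. -/
def gridGraph (n : ℕ) : SimpleGraph (Fin n × Fin n) :=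
  SimpleGraph.fromRel (fun a b =>
    (a.1 = b.1 ∧ (a.2 : ℕ) + 1 = (b.2 : ℕ)) ∨ (a.2 = b.2 ∧ (a.1 : ℕ) + 1 = (b.1 : ℕ)))

/-- `P` is a partition of the vertex set of the `n × n` grid graph into `n` parts,
each of size `n` and each inducing a connected subgraph. -/
def IsGridPartition (n : ℕ) (P : Finset (Finset (Fin n × Fin n))) : Prop :=
  P.card = n ∧
  (∀ s ∈ P, s.card = n) ∧
  (∀ s ∈ P, ((gridGraph n).induce (↑s : Set (Fin n × Fin n))).Connected) ∧
  (∀ v : Fin n × Fin n, ∃! s, s ∈ P ∧ v ∈ s)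

/-- The number of partitions of the `n × n` grid graph into `n` connected parts of size `n`. -/
noncomputable def gridPartitionCount (n : ℕ) : ℕ :=
  Nat.card {P : Finset (Finset (Fin n × Fin n)) // IsGridPartition n P}

/-- The cut score of a partition: the number of edges of the grid graph whose two endpoints
lie in different parts. -/
noncomputable def cutScore (n : ℕ) (P : Finset (Finset (Fin n × Fin n))) : ℕ :=
  {e ∈ (gridGraph n).edgeSet | ¬ ∃ s ∈ P, ∀ v ∈ e, v ∈ s}.ncard

/-!
A connected part `s` spans at least `|s| - 1` edges and distinct parts span disjoint sets of edges,
so the cut score of a partition of a finite graph `(V, E)` into `k` connected parts is at most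
`|E| - |V| + k`. For a box product `G □ H` with `H` a tree and `k = |V(G)|` this bound equals
`|E(G)| * |V(H)|`, which is exactly the number of edges of `G □ H` between different copies of `H`.
The grid is the box product of two paths, and its columns are the copies of the second one.
-/

open SimpleGraph

section CutEdges

variable {V : Type*} (G : SimpleGraph V)

/-- The edges of `G` with both endpoints in `s`. -/
def edgesWithin (s : Set V) : Set (Sym2 V) :=
  {e ∈ G.edgeSet | ∀ v ∈ e, v ∈ s}

/-- The edges of `G` cut by the family `P` of vertex sets, that is, contained in no member of `P`;
when `P` is a partition these are the edges between different parts. -/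
def cutEdges (P : Finset (Finset V)) : Set (Sym2 V) :=
  {e ∈ G.edgeSet | ¬ ∃ s ∈ P, ∀ v ∈ e, v ∈ s}

lemma edgesWithin_eq_image_edgeSet_induce (s : Set V) :
    edgesWithin G s = Sym2.map (Subtype.val : s → V) '' (G.induce s).edgeSet := by
  ext e
  constructor
  · induction e with
    | _ a b =>
      rintro ⟨hab, hs⟩
      exact ⟨s(⟨a, hs a (Sym2.mem_mk_left a b)⟩, ⟨b, hs b (Sym2.mem_mk_right a b)⟩), hab, rfl⟩
  · rintro ⟨e, he, rfl⟩
    induction e with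
    | _ a b => exact ⟨he, by simp⟩

variable {G} in
lemma card_le_ncard_edgesWithin_add_one {s : Finset V}
    (hs : (G.induce (s : Set V)).Connected) : s.card ≤ (edgesWithin G s).ncard + 1 := by
  rw [edgesWithin_eq_image_edgeSet_induce,
    Set.ncard_image_of_injective _ (Sym2.map.injective Subtype.val_injective),
    ← Nat.card_coe_set_eq]
  simpa using hs.card_vert_le_card_edgeSet_add_one

lemma pairwiseDisjoint_edgesWithin {P : Set (Finset V)} (hP : P.PairwiseDisjoint id) :
    P.PairwiseDisjoint fun s => edgesWithin G s := by
  intro s hs t ht hst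
  refine Set.disjoint_left.mpr fun e hes het => ?_
  have hv := e.out_fst_mem
  exact Finset.disjoint_left.mp (hP hs ht hst) (hes.2 _ hv) (het.2 _ hv)

lemma cutEdges_eq_edgeSet_diff (P : Finset (Finset V)) :
    cutEdges G P = G.edgeSet \ ⋃ s ∈ (P : Set (Finset V)), edgesWithin G s := by
  ext e
  simp +contextual [cutEdges, edgesWithin]

variable {G} in
theorem ncard_cutEdges_add_sum_card_le [Finite V] {P : Finset (Finset V)}
    (hdisj : (P : Set (Finset V)).PairwiseDisjoint id)
    (hconn : ∀ s ∈ P, (G.induce (s : Set V)).Connected) :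
    (cutEdges G P).ncard + ∑ s ∈ P, s.card ≤ G.edgeSet.ncard + P.card := by
  have hunion : (⋃ s ∈ (P : Set (Finset V)), edgesWithin G s).ncard =
      ∑ s ∈ P, (edgesWithin G s).ncard := by
    rw [P.finite_toSet.ncard_biUnion (fun _ _ => Set.toFinite _)
      (pairwiseDisjoint_edgesWithin G hdisj), finsum_mem_coe_finset]
  have hcut : (cutEdges G P).ncard + ∑ s ∈ P, (edgesWithin G s).ncard = G.edgeSet.ncard := by
    rw [cutEdges_eq_edgeSet_diff, ← hunion]
    exact Set.ncard_sdiff_add_ncard_of_subset (Set.iUnion₂_subset fun s _ e he => he.1)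
  calc (cutEdges G P).ncard + ∑ s ∈ P, s.card
      ≤ (cutEdges G P).ncard + ∑ s ∈ P, ((edgesWithin G s).ncard + 1) := by
        gcongr with s hs
        exact card_le_ncard_edgesWithin_add_one (hconn s hs)
    _ = G.edgeSet.ncard + P.card := by
        rw [Finset.sum_add_distrib, ← add_assoc, hcut, Finset.card_eq_sum_ones]

/-- `P` is a partition of the vertices of `G` into parts inducing connected subgraphs. The parts
are nonempty because `SimpleGraph.Connected` includes nonemptiness. -/
structure IsConnectedPartition (P : Finset (Finset V)) : Prop where
  connected : ∀ s ∈ P, (G.induce (s : Set V)).Connected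
  existsUnique_mem : ∀ v, ∃! s, s ∈ P ∧ v ∈ s

namespace IsConnectedPartition

variable {G} {P : Finset (Finset V)}

lemma pairwiseDisjoint (hP : IsConnectedPartition G P) :
    (P : Set (Finset V)).PairwiseDisjoint id := by
  refine fun s hs t ht hst => Finset.disjoint_left.mpr fun v hvs hvt => hst ?_
  exact (hP.existsUnique_mem v).unique ⟨hs, hvs⟩ ⟨ht, hvt⟩

lemma sum_card [Fintype V] (hP : IsConnectedPartition G P) :
    ∑ s ∈ P, s.card = Fintype.card V := by
  classical
  have hcover : P.biUnion id = Finset.univ := by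
    refine Finset.eq_univ_of_forall fun v => ?_
    obtain ⟨s, hs, hv⟩ := (hP.existsUnique_mem v).exists
    exact Finset.mem_biUnion.mpr ⟨s, hs, hv⟩
  rw [← Finset.card_univ, ← hcover, Finset.card_biUnion hP.pairwiseDisjoint]
  rfl

theorem ncard_cutEdges_add_card_le [Fintype V] (hP : IsConnectedPartition G P) :
    (cutEdges G P).ncard + Fintype.card V ≤ G.edgeSet.ncard + P.card :=
  hP.sum_card ▸ ncard_cutEdges_add_sum_card_le hP.pairwiseDisjoint hP.connected

end IsConnectedPartition

end CutEdges

section Fibers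

variable {V ι : Type*} [Fintype V] [Fintype ι] [DecidableEq V] [DecidableEq ι]

/-- The family of fibers of `f`, including the empty fiber if `f` is not surjective; the columns of
the grid are the fibers of the first projection. -/
def fibers (f : V → ι) : Finset (Finset V) :=
  Finset.univ.image fun i => Finset.univ.filter fun v => f v = i

lemma mem_fibers {f : V → ι} {s : Finset V} :
    s ∈ fibers f ↔ ∃ i, Finset.univ.filter (fun v => f v = i) = s := by
  simp [fibers]

lemma card_fibers {f : V → ι} (hf : Function.Surjective f) :
    (fibers f).card = Fintype.card ι := by
  refine Finset.card_image_of_injective _ fun i j hij => ?_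
  obtain ⟨v, rfl⟩ := hf i
  simpa using Finset.ext_iff.mp hij v

lemma existsUnique_mem_fibers (f : V → ι) (v : V) : ∃! s, s ∈ fibers f ∧ v ∈ s := by
  refine ⟨Finset.univ.filter fun w => f w = f v, ⟨mem_fibers.mpr ⟨f v, rfl⟩, by simp⟩, ?_⟩
  rintro s ⟨hs, hv⟩
  obtain ⟨i, rfl⟩ := mem_fibers.mp hs
  rw [(Finset.mem_filter.mp hv).2]

lemma mk_mem_cutEdges_fibers {G : SimpleGraph V} {f : V → ι} {a b : V} :
    s(a, b) ∈ cutEdges G (fibers f) ↔ G.Adj a b ∧ f a ≠ f b := by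
  have hfiber : (∃ s ∈ fibers f, ∀ v ∈ s(a, b), v ∈ s) ↔ f a = f b := by
    simp only [mem_fibers, exists_exists_eq_and, Sym2.ball, Finset.mem_filter_univ,
      exists_eq_left', eq_comm (a := f b)]
  rw [cutEdges, Set.mem_ofPred_eq, hfiber, mem_edgeSet]

lemma card_eq_of_mem_fibers_fst {α β : Type*} [Fintype α] [Fintype β] [DecidableEq α]
    [DecidableEq β] {s : Finset (α × β)} (hs : s ∈ fibers Prod.fst) :
    s.card = Fintype.card β := by
  obtain ⟨a, rfl⟩ := mem_fibers.mp hs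
  have hprod : (Finset.univ.filter fun x : α × β => x.1 = a) = {a} ×ˢ Finset.univ := by
    ext ⟨a', b⟩
    simp [eq_comm]
  rw [hprod, Finset.card_product, Finset.card_singleton, one_mul, Finset.card_univ]

end Fibers

section BoxProd

variable {α β : Type*} (G : SimpleGraph α) (H : SimpleGraph β)

theorem ncard_edgeSet_boxProd [Finite α] [Finite β] :
    (G □ H).edgeSet.ncard = G.edgeSet.ncard * Nat.card β + Nat.card α * H.edgeSet.ncard := by
  classical
  have := Fintype.ofFinite α
  have := Fintype.ofFinite β
  have hsum : 2 * (G □ H).edgeFinset.card =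
      2 * G.edgeFinset.card * Nat.card β + Nat.card α * (2 * H.edgeFinset.card) := by
    calc 2 * (G □ H).edgeFinset.card
        = ∑ a, ∑ b, (G.degree a + H.degree b) := by
          rw [← sum_degrees_eq_twice_card_edges, Fintype.sum_prod_type]
          refine Finset.sum_congr rfl fun a _ => Finset.sum_congr rfl fun b _ => ?_
          rw [degree_boxProd]
      _ = (∑ a, G.degree a) * Nat.card β + Nat.card α * ∑ b, H.degree b := by
          simp [Finset.sum_add_distrib, Finset.mul_sum, mul_comm]
      _ = 2 * G.edgeFinset.card * Nat.card β + Nat.card α * (2 * H.edgeFinset.card) := by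
          rw [sum_degrees_eq_twice_card_edges, sum_degrees_eq_twice_card_edges]
  simp only [← coe_edgeFinset, Set.ncard_coe_finset]
  linarith

variable {H} in
lemma connected_induce_fiber_fst (hH : H.Connected) (a : α) :
    ((G □ H).induce {x | x.1 = a}).Connected := by
  have hrange : Set.range (G.boxProdRight H a) = {x | x.1 = a} := by
    ext ⟨a', b⟩
    simp [eq_comm]
  rw [← hrange]
  exact (G.boxProdRight H a).isoInduceRange.connected_iff.mp hH

variable [Fintype α] [Fintype β]

variable {G H} in
theorem IsConnectedPartition.ncard_cutEdges_boxProd_le (hH : H.IsTree)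
    {P : Finset (Finset (α × β))} (hP : IsConnectedPartition (G □ H) P)
    (hcard : P.card = Fintype.card α) :
    (cutEdges (G □ H) P).ncard ≤ G.edgeSet.ncard * Fintype.card β := by
  have hbound := hP.ncard_cutEdges_add_card_le
  have htree : H.edgeSet.ncard + 1 = Fintype.card β := by
    simpa using (isTree_iff_connected_and_card.mp hH).2
  rw [ncard_edgeSet_boxProd, Fintype.card_prod, hcard, Nat.card_eq_fintype_card,
    Nat.card_eq_fintype_card, add_assoc, ← Nat.mul_succ, Nat.succ_eq_add_one, htree] at hbound
  exact Nat.le_of_add_le_add_right hbound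

variable [DecidableEq α] [DecidableEq β]

lemma cutEdges_boxProd_fibers_fst :
    cutEdges (G □ H) (fibers Prod.fst) = (G □ (⊥ : SimpleGraph β)).edgeSet := by
  ext e
  induction e with
  | _ x y =>
    rw [mk_mem_cutEdges_fibers, mem_edgeSet, boxProd_adj, boxProd_adj]
    have := G.ne_of_adj (a := x.1) (b := y.1)
    simp only [bot_adj]
    tauto

theorem ncard_cutEdges_boxProd_fibers_fst :
    (cutEdges (G □ H) (fibers Prod.fst)).ncard = G.edgeSet.ncard * Fintype.card β := by
  simp [cutEdges_boxProd_fibers_fst, ncard_edgeSet_boxProd]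

variable {H} in
lemma isConnectedPartition_fibers_fst (hH : H.Connected) :
    IsConnectedPartition (G □ H) (fibers Prod.fst) where
  connected s hs := by
    obtain ⟨a, rfl⟩ := mem_fibers.mp hs
    rw [Finset.coe_filter_univ]
    exact connected_induce_fiber_fst G hH a
  existsUnique_mem := existsUnique_mem_fibers _

variable {H} in
theorem columns_partition_max_cut_general (hH : H.IsTree) :
    IsConnectedPartition (G □ H) (fibers Prod.fst) ∧
    (fibers (Prod.fst : α × β → α)).card = Fintype.card α ∧
    (∀ s ∈ fibers (Prod.fst : α × β → α), s.card = Fintype.card β) ∧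
    (cutEdges (G □ H) (fibers Prod.fst)).ncard = G.edgeSet.ncard * Fintype.card β ∧
    IsGreatest {m : ℕ | ∃ Q : Finset (Finset (α × β)), IsConnectedPartition (G □ H) Q ∧
      Q.card = Fintype.card α ∧ (cutEdges (G □ H) Q).ncard = m}
      (G.edgeSet.ncard * Fintype.card β) := by
  have := hH.connected.nonempty
  have hpartition := isConnectedPartition_fibers_fst G hH.connected
  have hcard := card_fibers (Prod.fst_surjective (α := α) (β := β))
  have hcut := ncard_cutEdges_boxProd_fibers_fst G H
  refine ⟨hpartition, hcard, fun s => card_eq_of_mem_fibers_fst, hcut,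
    ⟨_, hpartition, hcard, hcut⟩, ?_⟩
  rintro _ ⟨Q, hQ, hQcard, rfl⟩
  exact hQ.ncard_cutEdges_boxProd_le hH hQcard

end BoxProd

lemma edgeSet_pathGraph_succ (n : ℕ) :
    (pathGraph (n + 1)).edgeSet = Set.range fun i : Fin n => s(i.castSucc, i.succ) := by
  ext e
  induction e with
  | _ a b =>
    rw [mem_edgeSet, pathGraph_adj]
    constructor
    · rintro (hab | hba)
      · exact ⟨⟨a, by omega⟩, by simp [hab]⟩
      · exact ⟨⟨b, by omega⟩, by simp [Fin.ext_iff, hba]⟩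
    · rintro ⟨i, hi⟩
      simp only [Sym2.eq_iff, Fin.ext_iff, Fin.val_castSucc, Fin.val_succ] at hi
      omega

lemma ncard_edgeSet_pathGraph_succ (n : ℕ) : (pathGraph (n + 1)).edgeSet.ncard = n := by
  have hinj : Function.Injective fun i : Fin n => s(i.castSucc, i.succ) := by
    intro i j hij
    simp only [Sym2.eq_iff, Fin.ext_iff, Fin.val_castSucc, Fin.val_succ] at hij ⊢
    omega
  rw [edgeSet_pathGraph_succ, ← Set.image_univ, Set.ncard_image_of_injective _ hinj,
    Set.ncard_univ, Nat.card_fin]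

theorem isTree_pathGraph_succ (n : ℕ) : (pathGraph (n + 1)).IsTree := by
  refine isTree_iff_connected_and_card.mpr ⟨pathGraph_connected n, ?_⟩
  rw [Nat.card_coe_set_eq, ncard_edgeSet_pathGraph_succ, Nat.card_fin]

lemma gridGraph_eq_boxProd (n : ℕ) : gridGraph n = pathGraph n □ pathGraph n := by
  ext a b
  simp only [gridGraph, fromRel_adj, boxProd_adj, pathGraph_adj, Prod.ext_iff, Fin.ext_iff, ne_eq]
  omega

lemma isGridPartition_iff {n : ℕ} {P : Finset (Finset (Fin n × Fin n))} :
    IsGridPartition n P ↔ IsConnectedPartition (pathGraph n □ pathGraph n) P ∧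
      P.card = n ∧ ∀ s ∈ P, s.card = n := by
  rw [← gridGraph_eq_boxProd]
  exact ⟨fun ⟨hcard, hsize, hconn, hunique⟩ => ⟨⟨hconn, hunique⟩, hcard, hsize⟩,
    fun ⟨⟨hconn, hunique⟩, hcard, hsize⟩ => ⟨hcard, hsize, hconn, hunique⟩⟩

lemma cutScore_eq_ncard_cutEdges {n : ℕ} (P : Finset (Finset (Fin n × Fin n))) :
    cutScore n P = (cutEdges (pathGraph n □ pathGraph n) P).ncard := by
  rw [← gridGraph_eq_boxProd, cutScore, cutEdges]

theorem columns_partition_max_cut (n : ℕ) (hn : 1 ≤ n) :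
    IsGridPartition n
      (Finset.image
        (fun i : Fin n => Finset.univ.filter (fun v : Fin n × Fin n => v.1 = i))
        Finset.univ) ∧
    cutScore n
      (Finset.image
        (fun i : Fin n => Finset.univ.filter (fun v : Fin n × Fin n => v.1 = i))
        Finset.univ) = n * (n - 1) ∧
    IsGreatest {m : ℕ | ∃ Q : Finset (Finset (Fin n × Fin n)),
        IsGridPartition n Q ∧ cutScore n Q = m} (n * (n - 1)) := by
  obtain ⟨m, rfl⟩ := Nat.exists_eq_add_of_le' hn
  obtain ⟨hpartition, hcard, hsize, hcut, hmax⟩ :=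
    columns_partition_max_cut_general (pathGraph (m + 1)) (isTree_pathGraph_succ m)
  simp only [Fintype.card_fin, ncard_edgeSet_pathGraph_succ, mul_comm m,
    ← cutScore_eq_ncard_cutEdges] at hcard hsize hcut hmax
  have hgrid := isGridPartition_iff.mpr ⟨hpartition, hcard, hsize⟩
  refine ⟨hgrid, hcut, ⟨_, hgrid, hcut⟩, ?_⟩
  rintro _ ⟨Q, hQ, rfl⟩
  obtain ⟨hQpartition, hQcard, -⟩ := isGridPartition_iff.mp hQ
  exact hmax.2 ⟨Q, hQpartition, hQcard, rfl⟩
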